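/- Let Ω ⊆ ℂ be open and let s, t, X, Y, F : Ω → ℝ be real-differentiable functions, with Wirtinger derivative f_z = (∂f/∂x − i ∂f/∂y)/2. Assume that at every point of Ω: X_z + iπ·t_z = 0, Y_z − iπ·s_z = 0, F_z = s·X_z + t·Y_z, and 1 + t ≠ 0. Define s̃ = (s−t)/(1+t), t̃ = t/(1+t), X̃ = X, and Ỹ = Y + X + F. Then at every point of Ω: X̃_z + iπ(1+t)²·t̃_z = 0 and Ỹ_z − iπ(1+t)²·s̃_z = 0. -/

import Mathlib

open Complex

/-- The Wirtinger derivative `f_z = (∂f/∂x − i ∂f/∂y)/2` of a real-valued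
function of a complex variable. -/
noncomputable def wirtingerD (f : ℂ → ℝ) (u : ℂ) : ℂ :=
  (((fderiv ℝ f u 1 : ℝ) : ℂ) - ((fderiv ℝ f u Complex.I : ℝ) : ℂ) * Complex.I) / 2

/-!
By the quotient rule `(1 + t)² t̃_z = t_z` and `(1 + t)² s̃_z = (1 + t) s_z - (1 + s) t_z`, while
the formula for `F_z` gives `Ỹ_z = (1 + s) X_z + (1 + t) Y_z`. Hence the first four-vertex relation
is the first lozenge relation, and the second is the combination of the two lozenge relations with
coefficients `1 + s` and `1 + t`.
-/

section QuotientRule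

variable {𝕜 E : Type*} [NontriviallyNormedField 𝕜] [NormedAddCommGroup E] [NormedSpace 𝕜 E]
  {f g : E → 𝕜} {f' g' : E →L[𝕜] 𝕜} {x : E}

theorem hasFDerivAt_fun_div (hf : HasFDerivAt f f' x) (hg : HasFDerivAt g g' x) (hgx : g x ≠ 0) :
    HasFDerivAt (fun y => f y / g y) ((g x ^ 2)⁻¹ • (g x • f' - f x • g')) x := by
  have hinv : HasFDerivAt (fun y => (g y)⁻¹) (-(g x ^ 2)⁻¹ • g') x :=
    (hasDerivAt_inv hgx).comp_hasFDerivAt x hg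
  simp only [div_eq_mul_inv]
  refine (hf.fun_mul hinv).congr_fderiv ?_
  ext v
  simp only [add_apply, sub_apply, smul_apply, smul_eq_mul]
  field

end QuotientRule

section Wirtinger

variable {f g : ℂ → ℝ} {u : ℂ}

theorem wirtingerD_add (hf : DifferentiableAt ℝ f u) (hg : DifferentiableAt ℝ g u) :
    wirtingerD (fun v => f v + g v) u = wirtingerD f u + wirtingerD g u := by
  simp only [wirtingerD, fderiv_fun_add hf hg, add_apply, ofReal_add]
  ring

theorem wirtingerD_sub (hf : DifferentiableAt ℝ f u) (hg : DifferentiableAt ℝ g u) :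
    wirtingerD (fun v => f v - g v) u = wirtingerD f u - wirtingerD g u := by
  simp only [wirtingerD, fderiv_fun_sub hf hg, sub_apply, ofReal_sub]
  ring

theorem wirtingerD_const_add (c : ℝ) : wirtingerD (fun v => c + f v) u = wirtingerD f u := by
  simp only [wirtingerD, fderiv_const_add]

theorem wirtingerD_div (hf : DifferentiableAt ℝ f u) (hg : DifferentiableAt ℝ g u)
    (hgu : g u ≠ 0) :
    wirtingerD (fun v => f v / g v) u =
      (g u * wirtingerD f u - f u * wirtingerD g u) / (g u : ℂ) ^ 2 := by
  simp only [wirtingerD, (hasFDerivAt_fun_div hf.hasFDerivAt hg.hasFDerivAt hgu).fderiv,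
    smul_apply, sub_apply, smul_eq_mul, ofReal_mul, ofReal_sub, ofReal_inv, ofReal_pow]
  ring

end Wirtinger

section FourVertex

variable {s t X Y F : ℂ → ℝ} {u : ℂ}

theorem sq_one_add_mul_wirtingerD_div_one_add {f : ℂ → ℝ} (hf : DifferentiableAt ℝ f u)
    (ht : DifferentiableAt ℝ t u) (hne : 1 + t u ≠ 0) :
    (((1 + t u) ^ 2 : ℝ) : ℂ) * wirtingerD (fun v => f v / (1 + t v)) u =
      (1 + t u) * wirtingerD f u - f u * wirtingerD t u := by
  have hneC : (1 + t u : ℂ) ≠ 0 := mod_cast hne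
  rw [wirtingerD_div hf (ht.const_add 1) hne, wirtingerD_const_add]
  push_cast
  field

theorem sq_one_add_mul_wirtingerD_self_div_one_add (ht : DifferentiableAt ℝ t u)
    (hne : 1 + t u ≠ 0) :
    (((1 + t u) ^ 2 : ℝ) : ℂ) * wirtingerD (fun v => t v / (1 + t v)) u = wirtingerD t u := by
  rw [sq_one_add_mul_wirtingerD_div_one_add ht ht hne]
  ring

theorem sq_one_add_mul_wirtingerD_sub_div_one_add (hs : DifferentiableAt ℝ s u)
    (ht : DifferentiableAt ℝ t u) (hne : 1 + t u ≠ 0) :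
    (((1 + t u) ^ 2 : ℝ) : ℂ) * wirtingerD (fun v => (s v - t v) / (1 + t v)) u =
      (1 + t u) * wirtingerD s u - (1 + s u) * wirtingerD t u := by
  rw [sq_one_add_mul_wirtingerD_div_one_add (hs.fun_sub ht) ht hne, wirtingerD_sub hs ht]
  push_cast
  ring

theorem wirtingerD_add_add_of_eq_mul_add_mul {a b : ℂ} (hX : DifferentiableAt ℝ X u)
    (hY : DifferentiableAt ℝ Y u) (hF : DifferentiableAt ℝ F u)
    (hFz : wirtingerD F u = a * wirtingerD X u + b * wirtingerD Y u) :
    wirtingerD (fun v => Y v + X v + F v) u =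
      (1 + a) * wirtingerD X u + (1 + b) * wirtingerD Y u := by
  rw [wirtingerD_add (hY.fun_add hX) hF, wirtingerD_add hY hX, hFz]
  ring

/-- Here `c` stands for `i κ(u)`, so passing to the four-vertex quantities multiplies an arbitrary,
possibly non-constant, `κ` by `(1 + t)²`; for lozenge tilings `κ = π`. -/
theorem four_vertex_trivial_potential_general {c : ℂ}
    (hs : DifferentiableAt ℝ s u) (ht : DifferentiableAt ℝ t u) (hX : DifferentiableAt ℝ X u)
    (hY : DifferentiableAt ℝ Y u) (hF : DifferentiableAt ℝ F u)
    (hXt : wirtingerD X u + c * wirtingerD t u = 0)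
    (hYs : wirtingerD Y u - c * wirtingerD s u = 0)
    (hFz : wirtingerD F u = s u * wirtingerD X u + t u * wirtingerD Y u)
    (hne : 1 + t u ≠ 0) :
    wirtingerD X u + c * (((1 + t u) ^ 2 : ℝ) : ℂ) *
        wirtingerD (fun v => t v / (1 + t v)) u = 0 ∧
      wirtingerD (fun v => Y v + X v + F v) u - c * (((1 + t u) ^ 2 : ℝ) : ℂ) *
        wirtingerD (fun v => (s v - t v) / (1 + t v)) u = 0 := by
  constructor
  · rwa [mul_assoc, sq_one_add_mul_wirtingerD_self_div_one_add ht hne]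
  · rw [mul_assoc, sq_one_add_mul_wirtingerD_sub_div_one_add hs ht hne,
      wirtingerD_add_add_of_eq_mul_add_mul hX hY hF hFz]
    linear_combination (1 + s u : ℂ) * hXt + (1 + t u : ℂ) * hYs

end FourVertex

/-- Trivial potential for the four-vertex model: if on an open set `Ω` the
lozenge quantities satisfy `X_z + iπ t_z = 0`, `Y_z − iπ s_z = 0`,
`F_z = s·X_z + t·Y_z` and `1 + t ≠ 0`, then the four-vertex quantities
`s̃ = (s−t)/(1+t)`, `t̃ = t/(1+t)`, `X̃ = X`, `Ỹ = Y + X + F` satisfy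
`X̃_z + iπ(1+t)²·t̃_z = 0` and `Ỹ_z − iπ(1+t)²·s̃_z = 0` on `Ω`. -/
theorem four_vertex_trivial_potential (Ω : Set ℂ) (hΩ : IsOpen Ω)
    (s t X Y F : ℂ → ℝ)
    (hs : DifferentiableOn ℝ s Ω) (ht : DifferentiableOn ℝ t Ω)
    (hX : DifferentiableOn ℝ X Ω) (hY : DifferentiableOn ℝ Y Ω)
    (hF : DifferentiableOn ℝ F Ω)
    (hXt : ∀ u ∈ Ω, wirtingerD X u + Complex.I * (Real.pi : ℂ) * wirtingerD t u = 0)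
    (hYs : ∀ u ∈ Ω, wirtingerD Y u - Complex.I * (Real.pi : ℂ) * wirtingerD s u = 0)
    (hFz : ∀ u ∈ Ω, wirtingerD F u =
      (s u : ℂ) * wirtingerD X u + (t u : ℂ) * wirtingerD Y u)
    (hne : ∀ u ∈ Ω, 1 + t u ≠ 0) :
    ∀ u ∈ Ω,
      wirtingerD X u + Complex.I * (Real.pi : ℂ) * (((1 + t u) ^ 2 : ℝ) : ℂ) *
        wirtingerD (fun v => t v / (1 + t v)) u = 0 ∧
      wirtingerD (fun v => Y v + X v + F v) u
        - Complex.I * (Real.pi : ℂ) * (((1 + t u) ^ 2 : ℝ) : ℂ) *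
          wirtingerD (fun v => (s v - t v) / (1 + t v)) u = 0 := by
  intro u hu
  have hu_nhds := hΩ.mem_nhds hu
  exact four_vertex_trivial_potential_general (hs.differentiableAt hu_nhds)
    (ht.differentiableAt hu_nhds) (hX.differentiableAt hu_nhds) (hY.differentiableAt hu_nhds)
    (hF.differentiableAt hu_nhds) (hXt u hu) (hYs u hu) (hFz u hu) (hne u hu)
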